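/- Let n, m ≥ 2 be integers with n ≠ m, and define G* : (0,1) → (0,1) by G*(x) = t/(1+t) with t = (x/(1−x))^{(n−1)/(m−1)}. Then ∫₀¹ ((1−x)^{n−1} G*(x)^m + x^{n−1} (1−G*(x))^m) dx < ∫₀¹ ((1−x)^{n−1} x^m + x^{n−1} (1−x)^m) dx. -/

import Mathlib

open MeasureTheory

/-!
For fixed `x ∈ (0,1)` the function `g ↦ (1-x)^(n-1) g^m + x^(n-1) (1-g)^m` is strictly convex on
`[0,1]`, and its critical point is the `g` whose odds `g/(1-g)` are the power `(n-1)/(m-1)` of the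
odds of `x`, that is `g = G*(x)`. So `G*` minimizes the integrand pointwise, and every alternative
that differs from `G*` on a set of positive measure has a strictly larger integral. When `n ≠ m`
the exponent is not `1`, so `G*(x) = x` forces the odds of `x` to be `1`, and the identity differs
from `G*` everywhere on `(0,1)` except at `1/2`.
-/

open Set

/-- The integrand of `P(D_{n,m} = 1) / n` when the second cdf has the value `g` at `x`: the first
term is for a first sample with minimum `x` lying above the second sample, the other one for a first
sample with maximum `x` lying below it. The sample sizes `n` and `m` may be any real numbers. -/
noncomputable def separationDensity (n m g x : ℝ) : ℝ :=
  (1 - x) ^ (n - 1) * g ^ m + x ^ (n - 1) * (1 - g) ^ m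

/-- The cdf on `(0,1)` whose odds at `x` are the `r`-th power of the odds `x / (1 - x)` of the
uniform cdf. The alternative `G*` is the case `r = (n - 1) / (m - 1)`. Values outside `(0,1)` are
junk. -/
noncomputable def oddsPowerCdf (r x : ℝ) : ℝ :=
  (x / (1 - x)) ^ r / (1 + (x / (1 - x)) ^ r)

section OddsPowerCdf

variable {r x : ℝ}

lemma div_one_sub_pos (hx : x ∈ Ioo (0 : ℝ) 1) : 0 < x / (1 - x) :=
  div_pos hx.1 (sub_pos.mpr hx.2)

lemma one_sub_oddsPowerCdf (hx : x ∈ Ioo (0 : ℝ) 1) :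
    1 - oddsPowerCdf r x = 1 / (1 + (x / (1 - x)) ^ r) := by
  have ht : 0 < (x / (1 - x)) ^ r := Real.rpow_pos_of_pos (div_one_sub_pos hx) r
  rw [oddsPowerCdf, one_sub_div (by positivity), add_sub_cancel_right]

lemma oddsPowerCdf_mem_Ioo (hx : x ∈ Ioo (0 : ℝ) 1) : oddsPowerCdf r x ∈ Ioo (0 : ℝ) 1 := by
  have ht : 0 < (x / (1 - x)) ^ r := Real.rpow_pos_of_pos (div_one_sub_pos hx) r
  refine ⟨div_pos ht (by positivity), sub_pos.mp ?_⟩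
  rw [one_sub_oddsPowerCdf hx]
  positivity

lemma oddsPowerCdf_div_one_sub (hx : x ∈ Ioo (0 : ℝ) 1) :
    oddsPowerCdf r x / (1 - oddsPowerCdf r x) = (x / (1 - x)) ^ r := by
  have ht : 0 < (x / (1 - x)) ^ r := Real.rpow_pos_of_pos (div_one_sub_pos hx) r
  rw [one_sub_oddsPowerCdf hx, oddsPowerCdf, div_div_div_cancel_right₀ (by positivity), div_one]

lemma oddsPowerCdf_ne_self (hr : r ≠ 1) (hx : x ∈ Ioo (0 : ℝ) 1) (hx_half : x ≠ 1 / 2) :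
    oddsPowerCdf r x ≠ x := by
  intro hfix
  have hodds_ne : x / (1 - x) ≠ 1 := by
    rw [Ne, div_eq_one_iff_eq (sub_pos.mpr hx.2).ne']
    exact fun h ↦ hx_half (by linarith)
  have hodds := oddsPowerCdf_div_one_sub (r := r) hx
  rw [hfix] at hodds
  exact hr ((Real.rpow_right_inj (div_one_sub_pos hx) hodds_ne).mp
    (by rw [← hodds, Real.rpow_one]))

lemma not_id_ae_eq_oddsPowerCdf (hr : r ≠ 1) :
    ¬ id =ᵐ[volume.restrict (Ioo (0 : ℝ) 1)] oddsPowerCdf r := by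
  intro heq
  have : (ae (volume.restrict (Ioo (0 : ℝ) 1))).NeBot :=
    ae_neBot.mpr (by simp [Measure.restrict_eq_zero])
  obtain ⟨x, hfix, hx, hx_half⟩ := (heq.and ((ae_restrict_mem measurableSet_Ioo).and
    (ae_restrict_of_ae (Measure.ae_ne volume (1 / 2 : ℝ))))).exists
  exact oddsPowerCdf_ne_self hr hx hx_half hfix.symm

lemma measurable_oddsPowerCdf : Measurable (oddsPowerCdf r) := by
  unfold oddsPowerCdf
  fun_prop

end OddsPowerCdf

section Minimization

variable {m g y : ℝ}

lemma rpow_tangent_lt (hm : 1 < m) (hg : 0 < g) (hy : 0 ≤ y) (hne : y ≠ g) :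
    g ^ m + m * g ^ (m - 1) * (y - g) < y ^ m := by
  have hbernoulli : 1 + m * (y / g - 1) < (1 + (y / g - 1)) ^ m :=
    one_add_mul_self_lt_rpow_one_add (by linarith [div_nonneg hy hg.le])
      (sub_ne_zero.mpr (mt (div_eq_one_iff_eq hg.ne').mp hne)) hm
  rw [add_sub_cancel, Real.div_rpow hy hg.le, lt_div_iff₀ (Real.rpow_pos_of_pos hg m)]
    at hbernoulli
  calc g ^ m + m * g ^ (m - 1) * (y - g) = (1 + m * (y / g - 1)) * g ^ m := by
        rw [Real.rpow_sub_one hg.ne']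
        field_simp
    _ < y ^ m := hbernoulli

lemma weighted_rpow_add_lt_of_critical {a b : ℝ} (hm : 1 < m) (ha : 0 < a) (hb : 0 < b)
    (hg : g ∈ Ioo (0 : ℝ) 1) (hy : y ∈ Icc (0 : ℝ) 1) (hne : y ≠ g)
    (hcrit : a * g ^ (m - 1) = b * (1 - g) ^ (m - 1)) :
    a * g ^ m + b * (1 - g) ^ m < a * y ^ m + b * (1 - y) ^ m := by
  have htangent := rpow_tangent_lt hm hg.1 hy.1 hne
  have htangent' := rpow_tangent_lt hm (sub_pos.mpr hg.2) (sub_nonneg.mpr hy.2)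
    (mt sub_right_injective.eq_iff.mp hne)
  calc a * g ^ m + b * (1 - g) ^ m
      = a * (g ^ m + m * g ^ (m - 1) * (y - g)) +
          b * ((1 - g) ^ m + m * (1 - g) ^ (m - 1) * (1 - y - (1 - g))) := by
        linear_combination (-(m * (y - g))) * hcrit
    _ < a * y ^ m + b * (1 - y) ^ m := by gcongr

lemma oddsPowerCdf_critical {p x : ℝ} (hm : m ≠ 1) (hx : x ∈ Ioo (0 : ℝ) 1) :
    (1 - x) ^ p * oddsPowerCdf (p / (m - 1)) x ^ (m - 1) =
      x ^ p * (1 - oddsPowerCdf (p / (m - 1)) x) ^ (m - 1) := by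
  have hodds := congrArg (· ^ (m - 1)) (oddsPowerCdf_div_one_sub (r := p / (m - 1)) hx)
  obtain ⟨hG0, hG1⟩ := oddsPowerCdf_mem_Ioo (r := p / (m - 1)) hx
  have hx1 : 0 < 1 - x := sub_pos.mpr hx.2
  simp only [← Real.rpow_mul (div_one_sub_pos hx).le,
    div_mul_cancel₀ p (sub_ne_zero.mpr hm)] at hodds
  rw [Real.div_rpow hG0.le (sub_pos.mpr hG1).le, Real.div_rpow hx.1.le hx1.le,
    div_eq_div_iff (Real.rpow_pos_of_pos (sub_pos.mpr hG1) _).ne'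
      (Real.rpow_pos_of_pos hx1 _).ne'] at hodds
  rw [mul_comm, hodds]

lemma separationDensity_oddsPowerCdf_lt {n x : ℝ} (hm : 1 < m) (hx : x ∈ Ioo (0 : ℝ) 1)
    (hg : g ∈ Icc (0 : ℝ) 1) (hne : g ≠ oddsPowerCdf ((n - 1) / (m - 1)) x) :
    separationDensity n m (oddsPowerCdf ((n - 1) / (m - 1)) x) x < separationDensity n m g x :=
  weighted_rpow_add_lt_of_critical hm (Real.rpow_pos_of_pos (sub_pos.mpr hx.2) _)
    (Real.rpow_pos_of_pos hx.1 _) (oddsPowerCdf_mem_Ioo hx) hg hne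
    (oddsPowerCdf_critical hm.ne' hx)

end Minimization

section Integration

variable {n m : ℝ} {H : ℝ → ℝ}

lemma integrableOn_one_sub_rpow {p : ℝ} (hp : -1 < p) :
    IntegrableOn (fun x : ℝ ↦ (1 - x) ^ p) (Ioo 0 1) := by
  have hrpow : IntervalIntegrable (fun x : ℝ ↦ x ^ p) volume 0 1 :=
    intervalIntegral.intervalIntegrable_rpow' hp
  rw [← intervalIntegrable_iff_integrableOn_Ioo_of_le zero_le_one]
  simpa only [sub_self, sub_zero] using (hrpow.comp_sub_left 1).symm

lemma integrable_mul_rpow_of_mem_Icc {α : Type*} [MeasurableSpace α] {μ : Measure α} {f h : α → ℝ}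
    (hf : Integrable f μ) (hh : AEMeasurable h μ) (hh_mem : ∀ᵐ x ∂μ, h x ∈ Icc (0 : ℝ) 1)
    (hm : 0 ≤ m) : Integrable (fun x ↦ f x * h x ^ m) μ := by
  refine hf.mul_bdd (c := 1) (hh.pow_const m).aestronglyMeasurable ?_
  filter_upwards [hh_mem] with x hx
  rw [Real.norm_of_nonneg (Real.rpow_nonneg hx.1 m)]
  exact Real.rpow_le_one hx.1 hx.2 hm

lemma integrableOn_separationDensity (hn : 0 < n) (hm : 0 ≤ m)
    (hH : AEMeasurable H (volume.restrict (Ioo 0 1)))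
    (hH_mem : ∀ᵐ x ∂volume.restrict (Ioo 0 1), H x ∈ Icc (0 : ℝ) 1) :
    IntegrableOn (fun x ↦ separationDensity n m (H x) x) (Ioo 0 1) := by
  have hp : -1 < n - 1 := by linarith
  have hH_mem' : ∀ᵐ x ∂volume.restrict (Ioo 0 1), 1 - H x ∈ Icc (0 : ℝ) 1 := by
    filter_upwards [hH_mem] with x hx
    exact ⟨sub_nonneg.mpr hx.2, sub_le_self 1 hx.1⟩
  exact (integrable_mul_rpow_of_mem_Icc (integrableOn_one_sub_rpow hp) hH hH_mem hm).add
    (integrable_mul_rpow_of_mem_Icc ((intervalIntegral.integrableOn_Ioo_rpow_iff one_pos).mpr hp)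
      (hH.const_sub 1) hH_mem' hm)

theorem setIntegral_separationDensity_oddsPowerCdf_lt (hn : 0 < n) (hm : 1 < m)
    (hH : AEMeasurable H (volume.restrict (Ioo 0 1)))
    (hH_mem : ∀ᵐ x ∂volume.restrict (Ioo 0 1), H x ∈ Icc (0 : ℝ) 1)
    (hne : ¬ H =ᵐ[volume.restrict (Ioo 0 1)] oddsPowerCdf ((n - 1) / (m - 1))) :
    ∫ x in Ioo 0 1, separationDensity n m (oddsPowerCdf ((n - 1) / (m - 1)) x) x <
      ∫ x in Ioo 0 1, separationDensity n m (H x) x := by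
  have hm0 : 0 ≤ m := zero_le_one.trans hm.le
  have hint := integrableOn_separationDensity hn hm0 hH hH_mem
  have hint_min := integrableOn_separationDensity hn hm0 measurable_oddsPowerCdf.aemeasurable
    (ae_restrict_of_forall_mem measurableSet_Ioo fun x hx ↦
      Ioo_subset_Icc_self (oddsPowerCdf_mem_Ioo (r := (n - 1) / (m - 1)) hx))
  have hlt : ∀ᵐ x ∂volume.restrict (Ioo 0 1), H x ≠ oddsPowerCdf ((n - 1) / (m - 1)) x →
      separationDensity n m (oddsPowerCdf ((n - 1) / (m - 1)) x) x <
        separationDensity n m (H x) x := by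
    filter_upwards [ae_restrict_mem measurableSet_Ioo, hH_mem] with x hx hHx
    exact separationDensity_oddsPowerCdf_lt hm hx hHx
  have hle : ∀ᵐ x ∂volume.restrict (Ioo 0 1),
      separationDensity n m (oddsPowerCdf ((n - 1) / (m - 1)) x) x ≤
        separationDensity n m (H x) x := by
    filter_upwards [hlt] with x hx
    rcases eq_or_ne (H x) (oddsPowerCdf ((n - 1) / (m - 1)) x) with h | h
    · rw [h]
    · exact (hx h).le
  refine (integral_mono_ae hint_min hint hle).lt_of_ne fun heq ↦ hne ?_
  filter_upwards [(integral_eq_iff_of_ae_le hint_min hint hle).mp heq, hlt] with x hdensity hx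
  exact of_not_not fun h ↦ (hx h).ne hdensity

end Integration

theorem ks_biased_smallest_level_integral_general {n m : ℝ} (hn : 0 < n) (hm : 1 < m)
    (hnm : n ≠ m) :
    ∫ x in (0 : ℝ)..1, separationDensity n m (oddsPowerCdf ((n - 1) / (m - 1)) x) x <
      ∫ x in (0 : ℝ)..1, separationDensity n m x x := by
  have hr : (n - 1) / (m - 1) ≠ 1 := by
    rwa [Ne, div_eq_one_iff_eq (sub_pos.mpr hm).ne', sub_left_inj]
  simpa only [intervalIntegral.integral_of_le zero_le_one, integral_Ioc_eq_integral_Ioo, id] using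
    setIntegral_separationDensity_oddsPowerCdf_lt hn hm aemeasurable_id
      (ae_restrict_of_forall_mem measurableSet_Ioo fun _ hx ↦ Ioo_subset_Icc_self hx)
      (not_id_ae_eq_oddsPowerCdf hr)

/-- For `n ≠ m` (both `≥ 2`), with `G*(x) = t/(1+t)`, `t = (x/(1−x))^{(n−1)/(m−1)}`,
the probability integral for the alternative `G*` is strictly smaller than under the null. -/
theorem ks_biased_smallest_level_integral (n m : ℕ) (hn : 2 ≤ n) (hm : 2 ≤ m) (hnm : n ≠ m) :
    let Gs : ℝ → ℝ := fun x =>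
      (x / (1 - x)) ^ (((n : ℝ) - 1) / ((m : ℝ) - 1)) /
        (1 + (x / (1 - x)) ^ (((n : ℝ) - 1) / ((m : ℝ) - 1)))
    (∫ x in (0:ℝ)..1, ((1 - x) ^ (n - 1) * (Gs x) ^ m + x ^ (n - 1) * (1 - Gs x) ^ m)) <
    ∫ x in (0:ℝ)..1, ((1 - x) ^ (n - 1) * x ^ m + x ^ (n - 1) * (1 - x) ^ m) := by
  simpa only [separationDensity, oddsPowerCdf, ← Nat.cast_pred (R := ℝ) (zero_lt_two.trans_le hn),
    Real.rpow_natCast] using ks_biased_smallest_level_integral_general (n := n) (m := m)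
      (by positivity) (by exact_mod_cast hm) (by exact_mod_cast hnm)
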